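/- arXiv:1803.11073 — 3 statements merged into one kernel-verified Lean document; each statement's English description precedes it below -/
import Mathlib

section
/- Let X be an infinite separable locally compact metric space without isolated points, let f : X → X be a continuous topologically mixing map, let β denote the diameter of X (β = ∞ if X is unbounded), and let M be an arbitrary infinite set of positive integers. Then there exist countably infinitely many pairwise disjoint Cantor sets S⁽¹⁾, S⁽²⁾, S⁽³⁾, … of totally transitive points of f whose union S = ⋃_{j≥1} S⁽ʲ⁾ is dense in X and is a β-scrambled set of f with respect to M: for all distinct x, y ∈ S, liminf_{n→∞, n∈M} ρ(fⁿ(x), fⁿ(y)) = 0 and limsup_{n→∞, n∈M} ρ(fⁿ(x), fⁿ(y)) ≥ β; moreover, for every n ≥ 1 and all pairwise distinct a₁, …, aₙ ∈ S, the point (a₁, …, aₙ) is a totally transitive point of the n-fold product map f × … × f on Xⁿ. -/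
open Filter ENNReal

/-- `f` is (topologically) mixing. -/
def TopMixing {X : Type*} [TopologicalSpace X] (f : X → X) : Prop :=
  ∀ U V : Set X, IsOpen U → IsOpen V → U.Nonempty → V.Nonempty →
    ∃ N : ℕ, ∀ n : ℕ, N ≤ n → (f^[n] '' U ∩ V).Nonempty

/-- A Cantor set: a nonempty compact, perfect, totally disconnected subset. -/
def IsCantorSet {X : Type*} [TopologicalSpace X] (C : Set X) : Prop :=
  C.Nonempty ∧ IsCompact C ∧ Perfect C ∧ IsTotallyDisconnected C

/-- `x` is a totally transitive point of `g`. -/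
def TotallyTransitivePoint {Y : Type*} [TopologicalSpace Y] (g : Y → Y) (x : Y) : Prop :=
  ∀ k : ℕ, 1 ≤ k → Dense (Set.range fun m : ℕ => g^[k * m] x)

/-- The `n`-fold product map `f × f × ⋯ × f` on `Xⁿ`. -/
def prodMap {X : Type*} (n : ℕ) (f : X → X) : (Fin n → X) → (Fin n → X) :=
  fun x i => f (x i)

namespace MixScr

open Topology TopologicalSpace

/-- Parameter space: countably many copies of the Cantor space. -/
abbrev K : Type := ℕ × (ℕ → Bool)

/-- Truncation to the first `m` bits. -/
def trunc (m : ℕ) (a : K) : ℕ × (Fin m → Bool) := (a.1, fun i => a.2 i)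

/-- Extension by `false`. -/
def ext (m : ℕ) (p : ℕ × (Fin m → Bool)) : K :=
  (p.1, fun k => if h : k < m then p.2 ⟨k, h⟩ else false)

lemma trunc_ext (m : ℕ) (p : ℕ × (Fin m → Bool)) : trunc m (ext m p) = p := by
  rcases p with ⟨j, w⟩
  simp [trunc, ext]

lemma continuous_trunc (m : ℕ) : Continuous (trunc m) := by
  unfold trunc
  fun_prop

lemma trunc_mono {m m' : ℕ} (h : m ≤ m') {a b : K} (hab : trunc m' a = trunc m' b) :
    trunc m a = trunc m b := by
  simp only [trunc, Prod.mk.injEq] at hab ⊢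
  refine ⟨hab.1, ?_⟩
  funext i
  exact congrFun hab.2 ⟨i, by omega⟩

lemma eq_of_trunc {a b : K} (h : ∀ m, trunc m a = trunc m b) : a = b := by
  have h0 : a.1 = b.1 := congrArg (fun p => p.1) (h 0)
  refine Prod.ext h0 ?_
  funext k
  have := congrArg Prod.snd (h (k+1))
  exact congrFun this ⟨k, by omega⟩

lemma completelyMetrizable (X : Type*) [MetricSpace X] [SeparableSpace X]
    [LocallyCompactSpace X] : IsCompletelyMetrizableSpace X := by
  let e : X → UniformSpace.Completion X := fun x => (x : UniformSpace.Completion X)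
  have he : IsEmbedding e := (UniformSpace.Completion.isUniformEmbedding_coe X).isEmbedding
  have hd : DenseRange e := UniformSpace.Completion.denseRange_coe
  have ho : IsOpen (Set.range e) := by
    rw [isOpen_iff_mem_nhds]
    rintro _ ⟨x, rfl⟩
    obtain ⟨C, hC, hx⟩ := exists_compact_mem_nhds x
    rw [he.isInducing.nhds_eq_comap, Filter.mem_comap] at hx
    obtain ⟨t, ht, htC⟩ := hx
    obtain ⟨O, hOt, hO, hxO⟩ := mem_nhds_iff.1 ht
    refine Filter.mem_of_superset (hO.mem_nhds hxO) ?_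
    have hcl : IsClosed (e '' C) := (hC.image he.continuous).isClosed
    have h1 : O ⊆ closure (O ∩ Set.range e) := hd.open_subset_closure_inter hO
    have h2 : closure (O ∩ Set.range e) ⊆ e '' C := by
      refine closure_minimal ?_ hcl
      rintro _ ⟨hy, y, rfl⟩
      exact ⟨y, htC (hOt hy), rfl⟩
    exact (h1.trans h2).trans (Set.image_subset_range _ _)
  have : PolishSpace (Set.range e) := ho.polishSpace
  exact he.toHomeomorph.isClosedEmbedding.IsCompletelyMetrizableSpace

lemma approx {X : Type*} [MetricSpace X] (O : Set C(K, X)) (hO : IsOpen O)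
    (φ : C(K, X)) (hφ : φ ∈ O) (m0 : ℕ) :
    ∃ m, m0 ≤ m ∧ ∃ V : ℕ × (Fin m → Bool) → Set X, (∀ p, IsOpen (V p) ∧ (V p).Nonempty) ∧
      ∀ ψ : C(K, X), (∀ a : K, a.1 < m → ψ a ∈ V (trunc m a)) → ψ ∈ O := by
  obtain ⟨⟨Q, ε⟩, ⟨hQ, hε⟩, hsub⟩ :=
    (nhds_basis_uniformity'
      (Metric.uniformity_basis_dist.compactConvergenceUniformity (α := K))).mem_iff.1
      (hO.mem_nhds hφ)
  simp only at hQ hε hsub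
  obtain ⟨J, hJ⟩ : ∃ J, ∀ a ∈ Q, a.1 < J := by
    obtain ⟨J, hJ⟩ := (hQ.image continuous_fst).bddAbove
    exact ⟨J + 1, fun a ha => Nat.lt_succ_of_le (hJ ⟨a, ha, rfl⟩)⟩
  let Q' : Set K := Set.Iio J ×ˢ Set.univ
  have hQ' : IsCompact Q' := (Set.finite_Iio J).isCompact.prod isCompact_univ
  obtain ⟨m1, hm1⟩ : ∃ m1, ∀ a ∈ Q', ∀ b ∈ Q', trunc m1 a = trunc m1 b → 
      dist (φ a) (φ b) < ε / 2 := by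
    by_contra! hcon
    let E : ℕ → Set (K × K) := fun m => (Q' ×ˢ Q') ∩
      ({q | trunc m q.1 = trunc m q.2} ∩ {q | ε / 2 ≤ dist (φ q.1) (φ q.2)})
    have hEc : ∀ m, IsClosed ({q : K × K | trunc m q.1 = trunc m q.2} ∩ 
        {q | ε / 2 ≤ dist (φ q.1) (φ q.2)}) := fun m => 
      (isClosed_eq ((continuous_trunc m).comp continuous_fst)
        ((continuous_trunc m).comp continuous_snd)).inter
        (isClosed_le continuous_const (by fun_prop))
    have hc : ∀ m, IsCompact (E m) := fun m => (hQ'.prod hQ').inter_right (hEc m)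
    obtain ⟨q, hq⟩ := IsCompact.nonempty_iInter_of_sequence_nonempty_isCompact_isClosed E
      (fun m q hq => ⟨hq.1, trunc_mono (Nat.le_succ m) hq.2.1, hq.2.2⟩)
      (fun m => by
        obtain ⟨a, ha, b, hb, h1, h2⟩ := hcon m
        exact ⟨(a, b), ⟨ha, hb⟩, h1, h2⟩) (hc 0) (fun m => (hc m).isClosed)
    rw [Set.mem_iInter] at hq
    have h1 := eq_of_trunc (fun m => (hq m).2.1)
    have h2 : ε / 2 ≤ dist (φ q.1) (φ q.2) := (hq 0).2.2
    rw [h1, dist_self] at h2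
    linarith
  refine ⟨max m0 (max J m1), le_max_left _ _, 
    fun p => Metric.ball (φ (ext _ p)) (ε / 2),
    fun p => ⟨Metric.isOpen_ball, ⟨_, Metric.mem_ball_self (half_pos hε)⟩⟩, ?_⟩
  intro ψ hψ
  apply hsub
  intro x hx
  have hxJ := hJ x hx
  have h1 := hψ x (lt_of_lt_of_le hxJ (by omega))
  rw [Metric.mem_ball, dist_comm] at h1
  have h2 := hm1 x ⟨hxJ, trivial⟩ (ext _ (trunc (max m0 (max J m1)) x)) ⟨hxJ, trivial⟩
    (trunc_mono (m' := max m0 (max J m1)) (by omega) (trunc_ext _ _).symm)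
  have h3 := dist_triangle (φ x) (φ (ext _ (trunc (max m0 (max J m1)) x))) (ψ x)
  change dist (φ x) (ψ x) < ε
  linarith

/-- A locally constant map. -/
def locConst {X : Type*} [TopologicalSpace X] (m : ℕ) (y : ℕ × (Fin m → Bool) → X) : C(K, X) :=
  ⟨fun a => y (trunc m a), continuous_of_discreteTopology.comp (continuous_trunc m)⟩

theorem key {X : Type*} [MetricSpace X] [Infinite X] [SeparableSpace X]
    [CompleteSpace X] (f : X → X) (hf : Continuous f) (hmix : TopMixing f)
    {ι : Type} [Countable ι] (L : ι → Set ℕ) (hL : ∀ r, (L r).Infinite) :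
    ∃ φ : C(K, X), (∀ n (a : Fin n → K), Function.Injective a → ∀ U : Fin n → Set X,
      (∀ i, IsOpen (U i) ∧ (U i).Nonempty) → ∀ r, ∃ t ∈ L r, ∀ i, f^[t] (φ (a i)) ∈ U i) ∧
      DenseRange φ := by
  classical
  have : SecondCountableTopology X := UniformSpace.secondCountable_of_separable X
  obtain ⟨b, hbc, hbe, hb⟩ := exists_countable_basis X
  have hbne : b.Nonempty := by
    obtain ⟨x⟩ := (inferInstance : Nonempty X)
    obtain ⟨v, hv, -⟩ := hb.exists_subset_of_mem_open (Set.mem_univ x) isOpen_univ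
    exact ⟨v, hv⟩
  obtain ⟨B, rfl⟩ := hbc.exists_eq_range hbne
  have hBo : ∀ i, IsOpen (B i) := fun i => hb.isOpen ⟨i, rfl⟩
  have hBn : ∀ i, (B i).Nonempty := fun i => by
    rw [Set.nonempty_iff_ne_empty]
    rintro h
    exact hbe ⟨i, h⟩
  have hBsub : ∀ U : Set X, IsOpen U → U.Nonempty → ∃ i, B i ⊆ U := by
    rintro U hU ⟨x, hx⟩
    obtain ⟨_, ⟨i, rfl⟩, -, h⟩ := hb.exists_subset_of_mem_open hx hU
    exact ⟨i, h⟩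
  let I := (Σ m : ℕ, (Fin m × (Fin m → Bool) → ℕ)) × ι
  let R : I → Set C(K, X) := fun q => ⋃ t ∈ L q.2, ⋂ p : Fin q.1.1 × (Fin q.1.1 → Bool),
    {ψ | Set.MapsTo ψ (trunc q.1.1 ⁻¹' {((p.1 : ℕ), p.2)}) (f^[t] ⁻¹' B (q.1.2 p))}
  have hRo : ∀ q, IsOpen (R q) := by
    intro q
    refine isOpen_biUnion fun t _ => isOpen_iInter_of_finite fun p => ?_
    refine ContinuousMap.isOpen_setOfPred_mapsTo ?_ ((hBo _).preimage (hf.iterate t))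
    have h1 : IsCompact (({(p.1 : ℕ)} : Set ℕ) ×ˢ (Set.univ : Set (ℕ → Bool))) :=
      isCompact_singleton.prod isCompact_univ
    refine h1.of_isClosed_subset ((isClosed_discrete _).preimage (continuous_trunc _)) ?_
    intro a ha
    exact ⟨congrArg Prod.fst (show trunc _ a = _ from ha), trivial⟩
  have hRd : ∀ q, Dense (R q) := by
    rintro ⟨⟨m0, W⟩, r⟩
    rw [dense_iff_inter_open]
    rintro O hO ⟨φ0, hφ0⟩
    obtain ⟨m, hm, V, hV, hVO⟩ := approx O hO φ0 hφ0 m0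
    -- target sets
    let res : ℕ × (Fin m → Bool) → (Fin m0 → Bool) := fun p i => p.2 ⟨i, by omega⟩
    let T : ℕ × (Fin m → Bool) → Set X := fun p =>
      if h : p.1 < m0 then B (W (⟨p.1, h⟩, res p)) else Set.univ
    have hT : ∀ p, IsOpen (T p) ∧ (T p).Nonempty := by
      intro p
      by_cases h : p.1 < m0
      · simp only [T, dif_pos h]; exact ⟨hBo _, hBn _⟩
      · simp only [T, dif_neg h]; exact ⟨isOpen_univ, Set.univ_nonempty⟩
    choose N hN using fun p => hmix (V p) (T p) (hV p).1 (hT p).1 (hV p).2 (hT p).2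
    obtain ⟨N0, hN0⟩ : ∃ N0, ∀ p : ℕ × (Fin m → Bool), p.1 < m → N p ≤ N0 := by
      have hfin : (Set.Iio m ×ˢ (Set.univ : Set (Fin m → Bool))).Finite :=
        (Set.finite_Iio m).prod Set.finite_univ
      obtain ⟨N0, h⟩ := (hfin.image N).bddAbove
      exact ⟨N0, fun p hp => h ⟨p, ⟨hp, trivial⟩, rfl⟩⟩
    obtain ⟨t, htL, ht⟩ := (hL r).exists_gt N0
    have hy : ∀ p : ℕ × (Fin m → Bool), ∃ y, p.1 < m → y ∈ V p ∧ f^[t] y ∈ T p := by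
      intro p
      by_cases h : p.1 < m
      · obtain ⟨_, ⟨y, hy, rfl⟩, hy2⟩ := hN p t ((hN0 p h).trans ht.le)
        exact ⟨y, fun _ => ⟨hy, hy2⟩⟩
      · exact ⟨φ0 (ext m p), fun h' => absurd h' h⟩
    choose y hy using hy
    refine ⟨locConst m y, hVO _ fun a ha => (hy _ ha).1, ?_⟩
    refine Set.mem_biUnion htL (Set.mem_iInter.2 fun p a ha => ?_)
    have ha' : trunc m0 a = ((p.1 : ℕ), p.2) := ha
    have ha1 : a.1 = p.1 := congrArg Prod.fst ha'
    have ha2 : res (trunc m a) = p.2 := congrArg Prod.snd ha'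
    have hlt : (trunc m a).1 < m0 := by
      change a.1 < m0
      rw [ha1]; exact p.1.2
    have h2 := (hy (trunc m a) (lt_of_lt_of_le hlt hm)).2
    simp only [T, dif_pos hlt] at h2
    have h3 : ((⟨(trunc m a).1, hlt⟩, res (trunc m a)) : Fin m0 × (Fin m0 → Bool)) = p :=
      Prod.ext (Fin.ext ha1) ha2
    rw [h3] at h2
    exact h2
  let D : ℕ → Set C(K, X) := fun i => ⋃ a : K, {ψ | ψ a ∈ B i}
  have hDo : ∀ i, IsOpen (D i) := fun i => isOpen_iUnion fun a =>
    (hBo i).preimage (continuous_eval_const a)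
  have hDd : ∀ i, Dense (D i) := by
    intro i
    rw [dense_iff_inter_open]
    rintro O hO ⟨φ0, hφ0⟩
    obtain ⟨m, hm, V, hV, hVO⟩ := approx O hO φ0 hφ0 0
    choose y hy using fun p => (hV p).2
    obtain ⟨z, hz⟩ := hBn i
    refine ⟨locConst m (fun p => if p.1 < m then y p else z), hVO _ fun a ha => ?_,
      Set.mem_iUnion.2 ⟨(m, fun _ => false), ?_⟩⟩
    · have : locConst m (fun p => if p.1 < m then y p else z) a = y (trunc m a) := if_pos ha
      rw [this]; exact hy _
    · have : locConst m (fun p => if p.1 < m then y p else z) (m, fun _ => false) = z :=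
        if_neg (lt_irrefl m)
      change locConst m _ _ ∈ B i
      rw [this]; exact hz
  have hdense : Dense (⋂ s : I ⊕ ℕ, Sum.elim R D s) := by
    refine dense_iInter_of_isOpen ?_ ?_
    · rintro (q | i)
      exacts [hRo q, hDo i]
    · rintro (q | i)
      exacts [hRd q, hDd i]
  obtain ⟨x0⟩ := (inferInstance : Nonempty X)
  have : Nonempty C(K, X) := ⟨ContinuousMap.const _ x0⟩
  obtain ⟨φ, hφ⟩ := hdense.nonempty
  rw [Set.mem_iInter] at hφ
  have hφR : ∀ q, φ ∈ R q := fun q => hφ (Sum.inl q)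
  have hφD : ∀ i, φ ∈ D i := fun i => hφ (Sum.inr i)
  refine ⟨φ, ?_, ?_⟩
  · intro n a ha U hU r
    choose c hc using fun i => hBsub (U i) (hU i).1 (hU i).2
    -- level separating the points
    have hsep : ∀ q : Fin n × Fin n, ∃ m, q.1 ≠ q.2 → trunc m (a q.1) ≠ trunc m (a q.2) := by
      intro q
      by_cases h : q.1 = q.2
      · exact ⟨0, fun h' => absurd h h'⟩
      · by_contra! hcon
        exact h (ha (eq_of_trunc fun m => (hcon m).2))
    choose M1 hM1 using hsep
    obtain ⟨m1, hm1⟩ := (Set.finite_range M1).bddAbove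
    obtain ⟨m2, hm2⟩ := (Set.finite_range (fun i => (a i).1)).bddAbove
    let m := max m1 (m2 + 1)
    have hlt : ∀ i, (a i).1 < m := fun i =>
      lt_of_lt_of_le (Nat.lt_succ_of_le (hm2 ⟨i, rfl⟩)) (le_max_right _ _)
    let g : Fin n → Fin m × (Fin m → Bool) := fun i => (⟨(a i).1, hlt i⟩, (trunc m (a i)).2)
    have hg : Function.Injective g := by
      intro i j hij
      by_contra hne
      refine hM1 (i, j) hne (trunc_mono (m' := m) ((hm1 ⟨(i, j), rfl⟩).trans (le_max_left _ _)) ?_)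
      exact Prod.ext (congrArg (fun p => (p.1 : ℕ)) hij) (congrArg (fun p => p.2) hij)
    obtain ⟨t, ht, h⟩ := Set.mem_iUnion₂.1 (hφR (⟨m, Function.extend g c 0⟩, r))
    refine ⟨t, ht, fun i => hc i ?_⟩
    have h2 := Set.mem_iInter.1 h (g i) (show a i ∈ _ from rfl)
    change f^[t] (φ (a i)) ∈ B (Function.extend g c 0 (g i)) at h2
    rwa [hg.extend_apply] at h2
  · intro x
    rw [mem_closure_iff]
    intro O hO hx
    obtain ⟨i, hi⟩ := hBsub O hO ⟨x, hx⟩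
    obtain ⟨a, ha⟩ := Set.mem_iUnion.1 (hφD i)
    exact ⟨φ a, hi ha, a, rfl⟩

theorem key2 {X : Type*} [TopologicalSpace X] [IsCompletelyMetrizableSpace X] [Infinite X]
    [SeparableSpace X] (f : X → X) (hf : Continuous f) (hmix : TopMixing f)
    {ι : Type} [Countable ι] (L : ι → Set ℕ) (hL : ∀ r, (L r).Infinite) :
    ∃ φ : C(K, X), (∀ n (a : Fin n → K), Function.Injective a → ∀ U : Fin n → Set X,
      (∀ i, IsOpen (U i) ∧ (U i).Nonempty) → ∀ r, ∃ t ∈ L r, ∀ i, f^[t] (φ (a i)) ∈ U i) ∧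
      DenseRange φ := by
  let _ := upgradeIsCompletelyMetrizable X
  exact key f hf hmix L hL

lemma accPt_cantor (z : ℕ → Bool) {O : Set (ℕ → Bool)} (hO : IsOpen O) (hz : z ∈ O) :
    ∃ w ∈ O, w ≠ z := by
  have ht : Tendsto (fun n => Function.update z n (!z n)) atTop (𝓝 z) := by
    rw [tendsto_pi_nhds]
    intro k
    refine tendsto_const_nhds.congr' ?_
    filter_upwards [eventually_gt_atTop k] with n hn
    rw [Function.update_of_ne hn.ne]
  obtain ⟨n, hn⟩ := (ht.eventually (hO.mem_nhds hz)).exists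
  refine ⟨_, hn, fun h => ?_⟩
  have := congrFun h n
  simp at this

lemma cantor_image {X : Type*} [TopologicalSpace X] [T2Space X] (g : (ℕ → Bool) → X)
    (hg : Continuous g) (hi : Function.Injective g) : IsCantorSet (Set.range g) := by
  have he : IsEmbedding g := (hg.isClosedEmbedding hi).isEmbedding
  refine ⟨Set.range_nonempty g, isCompact_range hg, ⟨(isCompact_range hg).isClosed, ?_⟩, ?_⟩
  · rintro _ ⟨z, rfl⟩
    rw [accPt_iff_nhds]
    intro U hU
    obtain ⟨O, hOU, hO, hx⟩ := mem_nhds_iff.1 hU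
    obtain ⟨w, hw, hne⟩ := accPt_cantor z (hO.preimage hg) hx
    exact ⟨g w, ⟨hOU hw, w, rfl⟩, fun h => hne (hi h)⟩
  · rw [← Set.image_univ, he.isTotallyDisconnected_image]
    exact isTotallyDisconnected_of_totallyDisconnectedSpace _

lemma prodMap_iterate {X : Type*} (n : ℕ) (f : X → X) (t : ℕ) (x : Fin n → X) (i : Fin n) :
    (prodMap n f)^[t] x i = f^[t] (x i) := by
  induction t generalizing x with
  | zero => rfl
  | succ t ih => rw [Function.iterate_succ_apply, ih, Function.iterate_succ_apply]; rfl

/-- Time sets. -/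
def times (M : Set ℕ) : ℕ ⊕ ℕ → Set ℕ :=
  Sum.elim (fun k => Set.range fun m => (k + 1) * m) (fun N => M ∩ Set.Ici N)

lemma times_infinite (M : Set ℕ) (hM : M.Infinite) (r : ℕ ⊕ ℕ) : (times M r).Infinite := by
  rcases r with k | N
  · exact Set.infinite_range_of_injective fun a b h => Nat.eq_of_mul_eq_mul_left (Nat.succ_pos k) h
  · refine (hM.sdiff (Set.finite_Iio N)).mono ?_
    rintro x ⟨hx, hx2⟩
    exact ⟨hx, Set.mem_Ici.2 (not_lt.1 hx2)⟩

end MixScr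

theorem mixing_scrambled_wrt_M {X : Type*} [MetricSpace X] [Infinite X]
    [TopologicalSpace.SeparableSpace X] [LocallyCompactSpace X]
    (hiso : ∀ x : X, ¬ IsOpen ({x} : Set X))
    (f : X → X) (hf : Continuous f) (hmix : TopMixing f)
    (β : ℝ≥0∞) (hβ : β = EMetric.diam (Set.univ : Set X))
    (M : Set ℕ) (hM : M.Infinite) (hM1 : ∀ m ∈ M, 1 ≤ m) :
    ∃ S : ℕ → Set X,
      (∀ i j, i ≠ j → Disjoint (S i) (S j)) ∧
      (∀ j, IsCantorSet (S j)) ∧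
      (∀ j, ∀ a ∈ S j, TotallyTransitivePoint f a) ∧
      Dense (⋃ j, S j) ∧
      (∀ x ∈ ⋃ j, S j, ∀ y ∈ ⋃ j, S j, x ≠ y →
        Filter.liminf (fun n : ℕ => edist (f^[n] x) (f^[n] y)) (atTop ⊓ 𝓟 M) = 0 ∧
        β ≤ Filter.limsup (fun n : ℕ => edist (f^[n] x) (f^[n] y)) (atTop ⊓ 𝓟 M)) ∧
      (∀ n : ℕ, 1 ≤ n → ∀ a : Fin n → X, (∀ i, a i ∈ ⋃ j, S j) →
        Function.Injective a → TotallyTransitivePoint (prodMap n f) a) := by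
  classical
  have hcm := MixScr.completelyMetrizable X
  obtain ⟨φ, hφ, hd⟩ := MixScr.key2 f hf hmix (MixScr.times M) (MixScr.times_infinite M hM)
  have pair : ∀ a b : MixScr.K, a ≠ b → ∀ U V : Set X, IsOpen U → IsOpen V → U.Nonempty →
      V.Nonempty → ∀ r, ∃ t ∈ MixScr.times M r, f^[t] (φ a) ∈ U ∧ f^[t] (φ b) ∈ V := by
    intro a b hab U V hU hV hUn hVn r
    obtain ⟨t, ht, h⟩ := hφ 2 ![a, b] (by
      intro i j hij
      fin_cases i <;> fin_cases j <;> simp_all) ![U, V] (by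
      intro i
      fin_cases i
      · exact ⟨hU, hUn⟩
      · exact ⟨hV, hVn⟩) r
    exact ⟨t, ht, h 0, h 1⟩
  have hinj : Function.Injective φ := by
    intro a b hab
    by_contra hne
    obtain ⟨p, q, hpq⟩ := exists_pair_ne X
    obtain ⟨U, V, hU, hV, hp, hq, hdis⟩ := t2_separation hpq
    obtain ⟨t, -, h1, h2⟩ := pair a b hne U V hU hV ⟨p, hp⟩ ⟨q, hq⟩ (Sum.inl 0)
    rw [hab] at h1
    exact Set.disjoint_left.1 hdis h1 h2
  have hprod : ∀ n : ℕ, ∀ a : Fin n → MixScr.K, Function.Injective a →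
      TotallyTransitivePoint (prodMap n f) (fun i => φ (a i)) := by
    intro n a ha k hk x
    rw [mem_closure_iff]
    intro O hO hx
    obtain ⟨u, hu, huO⟩ := isOpen_pi_iff'.1 hO x hx
    obtain ⟨t, ⟨m, rfl⟩, h⟩ := hφ n a ha u (fun i => ⟨(hu i).1, _, (hu i).2⟩) (Sum.inl (k - 1))
    refine ⟨_, huO fun i _ => ?_, m, rfl⟩
    have := h i
    change (prodMap n f)^[k * m] _ i ∈ u i
    rw [MixScr.prodMap_iterate]
    simpa [Nat.sub_add_cancel hk] using this
  let S : ℕ → Set X := fun j => Set.range fun z => φ (j, z)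
  have hS : ∀ x, x ∈ ⋃ j, S j ↔ x ∈ Set.range φ := by
    intro x
    simp [S]
  have hfreq : ∀ p : ℕ → Prop, (∀ N, ∃ t ∈ MixScr.times M (Sum.inr N), p t) →
      ∃ᶠ n in atTop ⊓ Filter.principal M, p n := by
    intro p hp
    rw [Filter.frequently_inf_principal, Filter.frequently_atTop]
    intro N
    obtain ⟨t, ⟨htM, htN⟩, h⟩ := hp N
    exact ⟨t, htN, htM, h⟩
  refine ⟨S, ?_, ?_, ?_, ?_, ?_, ?_⟩
  · intro i j hij
    rw [Set.disjoint_left]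
    rintro _ ⟨z, rfl⟩ ⟨w, hw⟩
    exact hij (congrArg Prod.fst (hinj hw)).symm
  · intro j
    exact MixScr.cantor_image _ (by fun_prop) fun z w h => congrArg Prod.snd (hinj h)
  · rintro j _ ⟨z, rfl⟩ k hk x
    rw [mem_closure_iff]
    intro O hO hx
    obtain ⟨t, ⟨m, rfl⟩, h⟩ := hφ 1 (fun _ => (j, z)) (Function.injective_of_subsingleton _)
      (fun _ => O) (fun _ => ⟨hO, x, hx⟩) (Sum.inl (k - 1))
    have h0 := h 0
    simp only [Nat.sub_add_cancel hk] at h0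
    exact ⟨_, h0, m, rfl⟩
  · have : (⋃ j, S j) = Set.range φ := Set.ext hS
    rw [this]
    exact hd
  · intro x hx y hy hxy
    obtain ⟨a, rfl⟩ := (hS x).1 hx
    obtain ⟨b, rfl⟩ := (hS y).1 hy
    have hab : a ≠ b := fun h => hxy (congrArg φ h)
    constructor
    · by_contra hne
      obtain ⟨c, hc0, hc⟩ := exists_between (pos_iff_ne_zero.2 hne)
      refine absurd (Filter.liminf_le_of_frequently_le' (hfreq _ fun N => ?_)) (not_le.2 hc)
      obtain ⟨p⟩ := (inferInstance : Nonempty X)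
      have hc2 : 0 < c / 2 := ENNReal.half_pos hc0.ne'
      obtain ⟨t, ht, h1, h2⟩ := pair a b hab (Metric.eball p (c / 2)) (Metric.eball p (c / 2))
        Metric.isOpen_eball Metric.isOpen_eball ⟨p, Metric.mem_eball_self hc2⟩
        ⟨p, Metric.mem_eball_self hc2⟩ (Sum.inr N)
      refine ⟨t, ht, ?_⟩
      rw [Metric.mem_eball] at h1 h2
      calc edist (f^[t] (φ a)) (f^[t] (φ b)) ≤ edist (f^[t] (φ a)) p + edist (f^[t] (φ b)) p :=
            edist_triangle_right _ _ _
        _ ≤ c / 2 + c / 2 := add_le_add h1.le h2.le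
        _ = c := ENNReal.add_halves c
    · refine le_of_forall_lt fun c hc => ?_
      obtain ⟨c', hcc', hc'⟩ := exists_between hc
      refine lt_of_lt_of_le hcc' (Filter.le_limsup_of_frequently_le' (hfreq _ fun N => ?_))
      obtain ⟨p, q, hpq⟩ : ∃ p q : X, c' < edist p q := by
        by_contra! hcon
        refine absurd (hβ ▸ hc') (not_lt.2 ?_)
        exact Metric.ediam_le fun x _ y _ => hcon x y
      have hopen : IsOpen {w : X × X | c' < edist w.1 w.2} :=
        isOpen_lt continuous_const (by fun_prop)
      obtain ⟨U, V, hU, hV, hp, hq, hUV⟩ := isOpen_prod_iff.1 hopen p q hpq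
      obtain ⟨t, ht, h1, h2⟩ := pair a b hab U V hU hV ⟨p, hp⟩ ⟨q, hq⟩ (Sum.inr N)
      refine ⟨t, ht, ?_⟩
      have : c' < edist (f^[t] (φ a)) (f^[t] (φ b)) :=
        hUV (show (f^[t] (φ a), f^[t] (φ b)) ∈ U ×ˢ V from ⟨h1, h2⟩)
      exact this.le
  · intro n _ a ha hai
    choose c hc using fun i => (hS _).1 (ha i)
    have hci : Function.Injective c := fun i j h => hai (by rw [← hc i, ← hc j, h])
    have := hprod n c hci
    rwa [show (fun i => φ (c i)) = a from funext hc] at this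
end

section
/- Let X be an infinite separable locally compact metric space without isolated points, let f : X → X be a continuous topologically mixing map with a fixed point, let δ = inf_{n≥1} sup_{x∈X} ρ(fⁿ(x), x), and let M be an arbitrary infinite set of positive integers. Then there exist countably infinitely many pairwise disjoint Cantor sets S⁽¹⁾, S⁽²⁾, S⁽³⁾, … of totally transitive points of f, with union S = ⋃_{j≥1} S⁽ʲ⁾ dense in X, such that the set Ŝ = ⋃_{i≥0} fⁱ(S) is dense in X, invariant under f (f(Ŝ) ⊆ Ŝ), and is a δ-scrambled set of f with respect to M: for all distinct c, d ∈ Ŝ, liminf_{n→∞, n∈M} ρ(fⁿ(c), fⁿ(d)) = 0 and limsup_{n→∞, n∈M} ρ(fⁿ(c), fⁿ(d)) ≥ δ. -/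
open Filter ENNReal

theorem polish_of_locallyCompact {X : Type*} [MetricSpace X]
    [TopologicalSpace.SeparableSpace X] [LocallyCompactSpace X] : PolishSpace X := by
  have hd : DenseRange ((↑) : X → UniformSpace.Completion X) :=
    UniformSpace.Completion.denseRange_coe
  have hemb : Topology.IsEmbedding ((↑) : X → UniformSpace.Completion X) :=
    UniformSpace.Completion.isUniformEmbedding_coe X |>.isEmbedding
  have hopen : IsOpen (Set.range ((↑) : X → UniformSpace.Completion X)) := by
    rw [isOpen_iff_mem_nhds]
    rintro _ ⟨x, rfl⟩
    obtain ⟨K, hK, hxK⟩ := exists_compact_mem_nhds x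
    rw [hemb.nhds_eq_comap] at hxK
    obtain ⟨V', hV', hVK'⟩ := hxK
    obtain ⟨V, hVV', hV, hxV⟩ := mem_nhds_iff.1 hV'
    have hKc : IsClosed (((↑) : X → UniformSpace.Completion X) '' K) :=
      (hK.image hemb.continuous).isClosed
    refine mem_of_superset (hV.mem_nhds hxV) ?_
    have h1 : V ⊆ closure (V ∩ Set.range ((↑) : X → UniformSpace.Completion X)) :=
      hd.open_subset_closure_inter hV
    refine h1.trans ((closure_minimal ?_ hKc).trans (Set.image_subset_range _ _))
    rintro _ ⟨hy, y, rfl⟩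
    exact ⟨y, hVK' (hVV' hy), rfl⟩
  have := hopen.polishSpace
  exact (hemb.toHomeomorph).isClosedEmbedding.polishSpace

/-- Finite perturbation. -/
theorem finite_perturb {X ι : Type*} [MetricSpace X] [CompleteSpace X] [Finite ι]
    (G : Set (X × X)) (hG : IsOpen G) (hGd : Dense G) (h : ι → X) (ε : ℝ) (hε : 0 < ε) :
    ∃ q : ι → X, (∀ i, dist (h i) (q i) < ε) ∧ ∀ i j, i ≠ j → (q i, q j) ∈ G := by
  classical
  have := Fintype.ofFinite ι
  have key : Dense (⋂ p : {p : ι × ι // p.1 ≠ p.2}, {q : ι → X | (q p.1.1, q p.1.2) ∈ G}) := by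
    refine dense_iInter_of_isOpen (fun p => hG.preimage (by fun_prop)) ?_
    rintro ⟨⟨i, j⟩, hij⟩
    rw [Metric.dense_iff]
    intro q r hr
    obtain ⟨⟨a, b⟩, hab, habG⟩ := Metric.dense_iff.1 hGd (q i, q j) r hr
    refine ⟨Function.update (Function.update q i a) j b, ?_, ?_⟩
    · rw [Metric.mem_ball, dist_pi_lt_iff hr]
      rw [Metric.mem_ball, Prod.dist_eq, max_lt_iff] at hab
      intro k
      by_cases hkj : k = j
      · subst hkj; simpa using hab.2
      · by_cases hki : k = i
        · subst hki; simpa [hkj] using hab.1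
        · simpa [hkj, hki] using hr
    · have : i ≠ j := hij
      simpa [this] using habG
  obtain ⟨q, hq, hqG⟩ := Metric.dense_iff.1 key h ε hε
  rw [Metric.mem_ball, dist_pi_lt_iff hε] at hq
  refine ⟨q, fun i => by rw [dist_comm]; exact hq i, fun i j hij => ?_⟩
  exact Set.mem_iInter.1 hqG ⟨(i, j), hij⟩

/-- Density of the separation condition. -/
theorem dense_sep {Z X : Type*} [TopologicalSpace Z] [T2Space Z] [TotallyDisconnectedSpace Z]
    [MetricSpace X] [CompleteSpace X]
    (G : Set (X × X)) (hG : IsOpen G) (hGd : Dense G) (C D : Set Z)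
    (hC : IsCompact C) (hC' : IsOpen C) (hD : IsCompact D) (hD' : IsOpen D)
    (hCD : Disjoint C D) :
    Dense {φ : C(Z, X) | ∀ x ∈ C, ∀ y ∈ D, (φ x, φ y) ∈ G} := by
  classical
  intro φ
  have step : ∀ ε : ℝ, 0 < ε → ∃ ψ : C(Z, X), (∀ x ∈ C, ∀ y ∈ D, (ψ x, ψ y) ∈ G) ∧
      ∀ x, dist (φ x) (ψ x) < ε := by
    intro ε hε
    have approx : ∀ K : Set Z, IsCompact K → ∃ (n : ℕ) (g : K → Fin n) (h : Fin n → X),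
        Continuous g ∧ ∀ x : K, dist (φ x) (h (g x)) < ε / 2 := by
      intro K hK
      have := isCompact_iff_compactSpace.1 hK
      have hS : {p : X × X | dist p.1 p.2 < ε / 2} ∈ nhdsSet (Set.diagonal X) := by
        refine (IsOpen.mem_nhdsSet (isOpen_lt (by fun_prop) (by fun_prop))).2 ?_
        rintro ⟨x, y⟩ h
        have : x = y := h
        subst this
        simpa using hε
      exact ContinuousMap.exists_finite_approximation_of_mem_nhds_diagonal (φ.restrict K) hS
    obtain ⟨n, g, h, hg, hgh⟩ := approx C hC
    obtain ⟨m, g', h', hg', hgh'⟩ := approx D hD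
    obtain ⟨q, hq, hqG⟩ := finite_perturb G hG hGd (Sum.elim h h') (ε / 2) (half_pos hε)
    let ψ : Z → X := fun x => if hx : x ∈ C then q (Sum.inl (g ⟨x, hx⟩)) else
      if hx : x ∈ D then q (Sum.inr (g' ⟨x, hx⟩)) else φ x
    have hψC : ∀ x (hx : x ∈ C), ψ x = q (Sum.inl (g ⟨x, hx⟩)) := fun x hx => by
      simp [ψ, hx]
    have hψD : ∀ x (hx : x ∈ D), ψ x = q (Sum.inr (g' ⟨x, hx⟩)) := fun x hx => by
      have : x ∉ C := fun h => hCD.le_bot ⟨h, hx⟩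
      simp [ψ, hx, this]
    have hcont : Continuous ψ := by
      rw [continuous_iff_continuousAt]
      intro x
      by_cases hx : x ∈ C
      · have : ContinuousOn ψ C := by
          rw [continuousOn_iff_continuous_domRestrict]
          have : C.domRestrict ψ = fun x => q (Sum.inl (g x)) := by
            ext x; exact hψC x x.2
          rw [this]
          exact (continuous_of_discreteTopology (f := fun i => q (Sum.inl i))).comp hg
        exact this.continuousAt (hC'.mem_nhds hx)
      by_cases hx' : x ∈ D
      · have : ContinuousOn ψ D := by
          rw [continuousOn_iff_continuous_domRestrict]
          have : D.domRestrict ψ = fun x => q (Sum.inr (g' x)) := by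
            ext x; exact hψD x x.2
          rw [this]
          exact (continuous_of_discreteTopology (f := fun i => q (Sum.inr i))).comp hg'
        exact this.continuousAt (hD'.mem_nhds hx')
      · refine φ.continuous.continuousAt.congr ?_
        filter_upwards [hC.isClosed.isOpen_compl.mem_nhds hx,
          hD.isClosed.isOpen_compl.mem_nhds hx'] with y hy hy'
        have hy : y ∉ C := hy
        have hy' : y ∉ D := hy'
        simp [ψ, hy, hy']
    refine ⟨⟨ψ, hcont⟩, ?_, ?_⟩
    · intro x hx y hy
      change (ψ x, ψ y) ∈ G
      rw [hψC x hx, hψD y hy]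
      exact hqG _ _ (by simp)
    · intro x
      change dist (φ x) (ψ x) < ε
      by_cases hx : x ∈ C
      · rw [hψC x hx]
        have h1 := hgh ⟨x, hx⟩
        have h2 := hq (Sum.inl (g ⟨x, hx⟩))
        simp only [Sum.elim_inl] at h2
        exact (dist_triangle _ _ _).trans_lt (by linarith)
      by_cases hx' : x ∈ D
      · rw [hψD x hx']
        have h1 := hgh' ⟨x, hx'⟩
        have h2 := hq (Sum.inr (g' ⟨x, hx'⟩))
        simp only [Sum.elim_inr] at h2
        exact (dist_triangle _ _ _).trans_lt (by linarith)
      · simpa [ψ, hx, hx'] using hε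
  choose ψ hψG hψ using fun n : ℕ => step (1 / ((n : ℝ) + 1)) Nat.one_div_pos_of_nat
  refine mem_closure_of_tendsto (f := ψ) (b := atTop) ?_ (Eventually.of_forall hψG)
  rw [ContinuousMap.tendsto_iff_forall_isCompact_tendstoUniformlyOn]
  intro K _
  rw [Metric.tendstoUniformlyOn_iff]
  intro ε hε
  filter_upwards [(tendsto_one_div_add_atTop_nhds_zero_nat (𝕜 := ℝ)).eventually
    (gt_mem_nhds hε)] with n hn x _
  exact (hψ n x).trans hn

abbrev CZ := ℕ × (ℕ → Bool)

theorem dense_hit {X : Type*} [MetricSpace X] (V : Set X) (hVne : V.Nonempty) :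
    Dense {φ : C(CZ, X) | ∃ j : ℕ, ∀ x ∈ (({j} : Set ℕ) ×ˢ (Set.univ : Set (ℕ → Bool))),
      φ x ∈ V} := by
  classical
  obtain ⟨v, hv⟩ := hVne
  intro φ
  have hc : ∀ j : ℕ, Continuous (fun x : CZ => if x.1 = j then v else φ x) := by
    intro j
    refine Continuous.if ?_ continuous_const φ.continuous
    intro a ha
    have : IsClopen {a : CZ | a.1 = j} := (isClopen_discrete {j}).preimage continuous_fst
    rw [this.frontier_eq] at ha
    exact ha.elim
  refine mem_closure_of_tendsto (f := fun j => (⟨_, hc j⟩ : C(CZ, X))) (b := atTop) ?_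
    (Eventually.of_forall fun j => ⟨j, fun x hx => ?_⟩)
  · rw [ContinuousMap.tendsto_iff_forall_isCompact_tendstoUniformlyOn]
    intro K hK
    rw [Metric.tendstoUniformlyOn_iff]
    intro ε hε
    obtain ⟨N, hN⟩ := (hK.image continuous_fst).bddAbove
    filter_upwards [eventually_gt_atTop N] with n hn x hx
    have : x.1 ≤ N := hN ⟨x, hx, rfl⟩
    have : x.1 ≠ n := by omega
    simpa [this] using hε
  · have : x.1 = j := hx.1
    simpa [this] using hv

theorem mycielski {X : Type*} [TopologicalSpace X] [PolishSpace X] [Nonempty X]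
    (R : Set (X × X)) (hR : R ∈ residual (X × X)) :
    ∃ φ : C(CZ, X), (∀ x y, x ≠ y → (φ x, φ y) ∈ R) ∧ DenseRange φ := by
  let := TopologicalSpace.upgradeIsCompletelyMetrizable X
  obtain ⟨S, hSo, hSd, hSc, hSR⟩ := mem_residual_iff.1 hR
  have : Countable S := hSc
  have : Countable (TopologicalSpace.Clopens (ℕ → Bool)) :=
    TopologicalSpace.Clopens.countable_iff_secondCountable.2 inferInstance
  let I := {p : (ℕ × TopologicalSpace.Clopens (ℕ → Bool)) ×
    (ℕ × TopologicalSpace.Clopens (ℕ → Bool)) //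
      Disjoint (({p.1.1} : Set ℕ) ×ˢ (p.1.2 : Set (ℕ → Bool)))
        (({p.2.1} : Set ℕ) ×ˢ (p.2.2 : Set (ℕ → Bool)))}
  have hco : ∀ p : ℕ × TopologicalSpace.Clopens (ℕ → Bool),
      IsCompact (({p.1} : Set ℕ) ×ˢ (p.2 : Set (ℕ → Bool))) ∧
      IsOpen (({p.1} : Set ℕ) ×ˢ (p.2 : Set (ℕ → Bool))) := fun p =>
    ⟨isCompact_singleton.prod p.2.isClopen.isClosed.isCompact,
      (isOpen_discrete _).prod p.2.isClopen.isOpen⟩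
  let B := TopologicalSpace.countableBasis X
  have : Countable B := TopologicalSpace.countable_countableBasis X
  let A : (S × I) ⊕ B → Set C(CZ, X) := Sum.elim
    (fun p => {φ | ∀ x ∈ (({p.2.1.1.1} : Set ℕ) ×ˢ (p.2.1.1.2 : Set (ℕ → Bool))),
      ∀ y ∈ (({p.2.1.2.1} : Set ℕ) ×ˢ (p.2.1.2.2 : Set (ℕ → Bool))), (φ x, φ y) ∈ p.1.1})
    (fun V => {φ | ∃ j : ℕ, ∀ x ∈ (({j} : Set ℕ) ×ˢ (Set.univ : Set (ℕ → Bool))), φ x ∈ V.1})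
  have hAo : ∀ i, IsOpen (A i) := by
    rintro (⟨G, p, hp⟩ | V)
    · have hK := (hco p.1).1.prod (hco p.2).1
      have h1 := ContinuousMap.isOpen_setOfPred_mapsTo hK (hSo G.1 G.2)
      have h2 : Continuous (fun φ : C(CZ, X) => φ.prodMap φ) := by
        apply ContinuousMap.continuous_of_continuous_uncurry
        change Continuous (fun q : C(CZ, X) × (CZ × CZ) => (q.1 q.2.1, q.1 q.2.2))
        fun_prop
      convert h1.preimage h2 using 1
      ext φ
      simp only [A, Sum.elim_inl, Set.mem_ofPred_eq, Set.mem_preimage, Set.MapsTo]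
      constructor
      · rintro h ⟨x, y⟩ ⟨hx, hy⟩
        exact h x hx y hy
      · intro h x hx y hy
        exact @h (x, y) ⟨hx, hy⟩
    · have : A (Sum.inr V) = ⋃ j : ℕ, {φ : C(CZ, X) | Set.MapsTo φ
          (({j} : Set ℕ) ×ˢ (Set.univ : Set (ℕ → Bool))) V.1} := by
        ext φ; simp [A, Set.MapsTo]
      rw [this]
      exact isOpen_iUnion fun j => ContinuousMap.isOpen_setOfPred_mapsTo
        (isCompact_singleton.prod isCompact_univ) (TopologicalSpace.isOpen_of_mem_countableBasis V.2)
  have hAd : ∀ i, Dense (A i) := by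
    rintro (⟨G, p, hp⟩ | V)
    · exact dense_sep G.1 (hSo G.1 G.2) (hSd G.1 G.2) _ _ (hco p.1).1 (hco p.1).2
        (hco p.2).1 (hco p.2).2 hp
    · exact dense_hit V.1 (TopologicalSpace.nonempty_of_mem_countableBasis V.2)
  have : Nonempty C(CZ, X) := ⟨ContinuousMap.const _ (Classical.arbitrary X)⟩
  obtain ⟨φ, hφ⟩ := (dense_iInter_of_isOpen hAo hAd).nonempty
  rw [Set.mem_iInter] at hφ
  refine ⟨φ, ?_, ?_⟩
  · intro x y hxy
    apply hSR
    intro G hG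
    by_cases h1 : x.1 = y.1
    · have h2 : x.2 ≠ y.2 := fun h => hxy (Prod.ext h1 h)
      obtain ⟨U, hU, hxU, hyU⟩ := exists_isClopen_of_totally_separated h2
      exact hφ (Sum.inl (⟨G, hG⟩, ⟨((x.1, ⟨U, hU⟩), (y.1, ⟨Uᶜ, hU.compl⟩)), by
        rw [Set.disjoint_left]
        rintro a ⟨_, ha⟩ ⟨_, ha'⟩
        exact ha' ha⟩)) x ⟨rfl, hxU⟩ y ⟨rfl, hyU⟩
    · exact hφ (Sum.inl (⟨G, hG⟩, ⟨((x.1, ⊤), (y.1, ⊤)), by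
        rw [Set.disjoint_left]
        rintro a ⟨ha, _⟩ ⟨ha', _⟩
        exact h1 (ha.symm.trans ha')⟩)) x ⟨rfl, trivial⟩ y ⟨rfl, trivial⟩
  · rw [DenseRange, (TopologicalSpace.isBasis_countableBasis X).dense_iff]
    intro V hV _
    obtain ⟨j, hj⟩ := hφ (Sum.inr ⟨V, hV⟩)
    exact ⟨_, hj (j, fun _ => true) ⟨rfl, trivial⟩, Set.mem_range_self _⟩

theorem isCantorSet_image {X : Type*} [TopologicalSpace X] [T2Space X] (g : (ℕ → Bool) → X)
    (hg : Continuous g) (hinj : Function.Injective g) : IsCantorSet (Set.range g) := by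
  have hemb := hg.isClosedEmbedding hinj
  refine ⟨Set.range_nonempty _, isCompact_range hg, ⟨hemb.isClosed_range, ?_⟩, ?_⟩
  · rw [preperfect_iff_nhds]
    rintro _ ⟨a, rfl⟩ U hU
    have hU' : g ⁻¹' U ∈ nhds a := hg.continuousAt hU
    have ht : Tendsto (fun n : ℕ => Function.update a n (!(a n))) atTop (nhds a) := by
      rw [tendsto_pi_nhds]
      intro k
      refine tendsto_const_nhds.congr' ?_
      filter_upwards [eventually_gt_atTop k] with n hn
      rw [Function.update_of_ne (by omega)]
    obtain ⟨n, hn⟩ := (ht.eventually hU').exists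
    refine ⟨_, ⟨hn, Set.mem_range_self _⟩, fun h => ?_⟩
    have := congrFun (hinj h) n
    simp at this
  · rw [← Set.image_univ, hemb.isEmbedding.isTotallyDisconnected_image]
    exact isTotallyDisconnected_of_totallyDisconnectedSpace _

theorem mixing_denseRange {X : Type*} [TopologicalSpace X] {f : X → X}
    (hmix : TopMixing f) (i : ℕ) : DenseRange (f^[i]) := by
  rw [DenseRange, dense_iff_inter_open]
  intro V hV hVne
  have : Nonempty X := ⟨hVne.some⟩
  obtain ⟨N, hN⟩ := hmix Set.univ V isOpen_univ hV Set.univ_nonempty hVne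
  obtain ⟨_, ⟨x, _, rfl⟩, hx⟩ := hN (i + N) (by omega)
  rw [Function.iterate_add_apply] at hx
  exact ⟨_, hx, Set.mem_range_self _⟩

/-- The generic simultaneous visit lemma. -/
theorem visit_residual {X : Type*} [TopologicalSpace X] {f : X → X} (hf : Continuous f)
    (hmix : TopMixing f) (M : Set ℕ) (hM : M.Infinite) (O : Set (X × X)) (hO : IsOpen O)
    (hOne : O.Nonempty) :
    ∀ᶠ p : X × X in residual (X × X), ∀ N : ℕ, ∃ n, N ≤ n ∧ n ∈ M ∧
      (f^[n] p.1, f^[n] p.2) ∈ O := by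
  rw [eventually_countable_forall]
  intro N
  refine residual_of_dense_open ?_ ?_
  · have : {p : X × X | ∃ n, N ≤ n ∧ n ∈ M ∧ (f^[n] p.1, f^[n] p.2) ∈ O} =
        ⋃ n : ℕ, ⋃ (_ : N ≤ n ∧ n ∈ M), {p : X × X | (f^[n] p.1, f^[n] p.2) ∈ O} := by
      ext p; simp [and_assoc]
    change IsOpen {p : X × X | ∃ n, N ≤ n ∧ n ∈ M ∧ (f^[n] p.1, f^[n] p.2) ∈ O}
    rw [this]
    refine isOpen_iUnion fun n => isOpen_iUnion fun _ => hO.preimage ?_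
    have := hf.iterate n
    fun_prop
  · rw [dense_iff_inter_open]
    rintro W hW ⟨⟨a, b⟩, hab⟩
    obtain ⟨⟨c, d⟩, hcd⟩ := hOne
    obtain ⟨U, U', hU, hU', ha, hb, hUW⟩ := isOpen_prod_iff.1 hW a b hab
    obtain ⟨V, V', hV, hV', hc, hd, hVO⟩ := isOpen_prod_iff.1 hO c d hcd
    obtain ⟨N1, h1⟩ := hmix U V hU hV ⟨a, ha⟩ ⟨c, hc⟩
    obtain ⟨N2, h2⟩ := hmix U' V' hU' hV' ⟨b, hb⟩ ⟨d, hd⟩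
    obtain ⟨n, hnM, hn⟩ := hM.exists_gt (N + N1 + N2)
    obtain ⟨_, ⟨x, hx, rfl⟩, hxV⟩ := h1 n (by omega)
    obtain ⟨_, ⟨y, hy, rfl⟩, hyV⟩ := h2 n (by omega)
    exact ⟨(x, y), hUW ⟨hx, hy⟩, n, by omega, hnM, hVO ⟨hxV, hyV⟩⟩

theorem offdiag_residual {X : Type*} [TopologicalSpace X] [T2Space X]
    (hiso : ∀ x : X, ¬ IsOpen ({x} : Set X)) :
    ∀ᶠ p : X × X in residual (X × X), p.1 ≠ p.2 := by
  refine residual_of_dense_open (isOpen_ne_fun continuous_fst continuous_snd) ?_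
  rw [dense_iff_inter_open]
  rintro W hW ⟨⟨a, b⟩, hab⟩
  obtain ⟨U, U', hU, hU', ha, hb, hUW⟩ := isOpen_prod_iff.1 hW a b hab
  have : ∃ c ∈ U', a ≠ c := by
    by_contra! h
    apply hiso a
    have : U' = {a} := by
      refine Set.eq_singleton_iff_unique_mem.2 ⟨h b hb ▸ hb, fun x hx => (h x hx).symm⟩
    rwa [← this]
  obtain ⟨c, hc, hac⟩ := this
  exact ⟨(a, c), hUW ⟨ha, hc⟩, hac⟩

theorem mixing_invariant_delta_scrambled_wrt_M {X : Type*} [MetricSpace X] [Infinite X]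
    [TopologicalSpace.SeparableSpace X] [LocallyCompactSpace X]
    (hiso : ∀ x : X, ¬ IsOpen ({x} : Set X))
    (f : X → X) (hf : Continuous f) (hmix : TopMixing f)
    (hfix : ∃ z : X, f z = z)
    (δ : ℝ≥0∞) (hδ : δ = ⨅ (n : ℕ) (_ : 1 ≤ n), ⨆ x : X, edist (f^[n] x) x)
    (M : Set ℕ) (hM : M.Infinite) (hM1 : ∀ m ∈ M, 1 ≤ m) :
    ∃ S : ℕ → Set X,
      (∀ i j, i ≠ j → Disjoint (S i) (S j)) ∧
      (∀ j, IsCantorSet (S j)) ∧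
      (∀ j, ∀ a ∈ S j, TotallyTransitivePoint f a) ∧
      Dense (⋃ j, S j) ∧
      Dense (⋃ i : ℕ, f^[i] '' (⋃ j, S j)) ∧
      f '' (⋃ i : ℕ, f^[i] '' (⋃ j, S j)) ⊆ ⋃ i : ℕ, f^[i] '' (⋃ j, S j) ∧
      (∀ c ∈ ⋃ i : ℕ, f^[i] '' (⋃ j, S j), ∀ d ∈ ⋃ i : ℕ, f^[i] '' (⋃ j, S j), c ≠ d →
        Filter.liminf (fun n : ℕ => edist (f^[n] c) (f^[n] d)) (atTop ⊓ 𝓟 M) = 0 ∧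
        δ ≤ Filter.limsup (fun n : ℕ => edist (f^[n] c) (f^[n] d)) (atTop ⊓ 𝓟 M)) := by
  obtain ⟨z, hz⟩ := hfix
  have hpol : PolishSpace X := polish_of_locallyCompact
  have hfi : ∀ i, Continuous (f^[i]) := fun i => hf.iterate i
  have hδk : ∀ k, 1 ≤ k → ∀ r < δ, ∃ x, r < edist (f^[k] x) x := by
    intro k hk r hr
    have : δ ≤ ⨆ x : X, edist (f^[k] x) x := hδ ▸ iInf₂_le k hk
    exact lt_iSup_iff.1 (hr.trans_le this)
  -- proximality
  have e1 : ∀ᶠ p : X × X in residual (X × X), ∀ i k m : ℕ, ∀ N : ℕ, ∃ n, N ≤ n ∧ n ∈ M ∧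
      edist (f^[i] (f^[n] p.1)) (f^[k] (f^[n] p.2)) < ((m : ℝ≥0∞) + 1)⁻¹ := by
    simp only [eventually_countable_forall]
    intro i k m
    simp only [← eventually_countable_forall]
    have := hfi i
    have := hfi k
    refine visit_residual hf hmix M hM
      {q : X × X | edist (f^[i] q.1) (f^[k] q.2) < ((m : ℝ≥0∞) + 1)⁻¹}
      (isOpen_lt (by fun_prop) (by fun_prop)) ⟨(z, z), ?_⟩
    simp [Function.iterate_fixed hz]
  -- proximality of iterates of one point
  have e0 : ∀ᶠ p : X × X in residual (X × X), ∀ i k m : ℕ, ∀ N : ℕ, ∃ n, N ≤ n ∧ n ∈ M ∧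
      edist (f^[i] (f^[n] p.1)) (f^[k] (f^[n] p.1)) < ((m : ℝ≥0∞) + 1)⁻¹ := by
    simp only [eventually_countable_forall]
    intro i k m
    simp only [← eventually_countable_forall]
    have := hfi i
    have := hfi k
    refine visit_residual hf hmix M hM
      {q : X × X | edist (f^[i] q.1) (f^[k] q.1) < ((m : ℝ≥0∞) + 1)⁻¹}
      (isOpen_lt (by fun_prop) (by fun_prop)) ⟨(z, z), ?_⟩
    simp [Function.iterate_fixed hz]
  -- separation of distinct points
  have e2 : ∀ᶠ p : X × X in residual (X × X), ∀ (i k : ℕ) (q : ℚ),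
      (Real.toNNReal q : ℝ≥0∞) < δ → ∀ N : ℕ, ∃ n, N ≤ n ∧ n ∈ M ∧
      (Real.toNNReal q : ℝ≥0∞) < edist (f^[i] (f^[n] p.1)) (f^[k] (f^[n] p.2)) := by
    rw [eventually_countable_forall]; intro i
    rw [eventually_countable_forall]; intro k
    rw [eventually_countable_forall]; intro q
    by_cases hq : (Real.toNNReal q : ℝ≥0∞) < δ
    swap
    · exact Eventually.of_forall fun p h => (hq h).elim
    simp only [hq, true_imp_iff]
    have := hfi i
    have := hfi k
    refine visit_residual hf hmix M hM
      {w : X × X | (Real.toNNReal q : ℝ≥0∞) < edist (f^[i] w.1) (f^[k] w.2)}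
      (isOpen_lt (by fun_prop) (by fun_prop)) ?_
    obtain ⟨x, hx⟩ := hδk 1 le_rfl _ hq
    have hd := (mixing_denseRange hmix i).prodMap (mixing_denseRange hmix k)
    obtain ⟨⟨u, v⟩, huv⟩ := hd.exists_mem_open
      (s := {w : X × X | (Real.toNNReal q : ℝ≥0∞) < edist w.1 w.2})
      (isOpen_lt (by fun_prop) (by fun_prop)) ⟨(f^[1] x, x), hx⟩
    exact ⟨(u, v), huv⟩
  -- separation of iterates of one point
  have e3 : ∀ᶠ p : X × X in residual (X × X), ∀ (i k : ℕ) (q : ℚ),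
      i ≠ k → (Real.toNNReal q : ℝ≥0∞) < δ → ∀ N : ℕ, ∃ n, N ≤ n ∧ n ∈ M ∧
      (Real.toNNReal q : ℝ≥0∞) < edist (f^[i] (f^[n] p.1)) (f^[k] (f^[n] p.1)) := by
    rw [eventually_countable_forall]; intro i
    rw [eventually_countable_forall]; intro k
    rw [eventually_countable_forall]; intro q
    by_cases hq : (Real.toNNReal q : ℝ≥0∞) < δ
    swap
    · exact Eventually.of_forall fun p _ h => (hq h).elim
    by_cases hik : i ≠ k
    swap
    · exact Eventually.of_forall fun p h => (hik h).elim
    simp only [hq, true_imp_iff]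
    suffices h : ∀ᶠ p : X × X in residual (X × X), ∀ N : ℕ, ∃ n, N ≤ n ∧ n ∈ M ∧
        (Real.toNNReal q : ℝ≥0∞) < edist (f^[i] (f^[n] p.1)) (f^[k] (f^[n] p.1)) from
      h.mono fun p hp _ => hp
    have := hfi i
    have := hfi k
    have main : ∀ i l : ℕ, 1 ≤ l → ∃ w : X,
        (Real.toNNReal q : ℝ≥0∞) < edist (f^[l] (f^[i] w)) (f^[i] w) := by
      intro i l hl
      have := hfi l
      obtain ⟨x, hx⟩ := hδk l hl _ hq
      exact (mixing_denseRange hmix i).exists_mem_open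
        (s := {w : X | (Real.toNNReal q : ℝ≥0∞) < edist (f^[l] w) w})
        (isOpen_lt (by fun_prop) (by fun_prop)) ⟨_, hx⟩
    refine visit_residual hf hmix M hM
      {w : X × X | (Real.toNNReal q : ℝ≥0∞) < edist (f^[i] w.1) (f^[k] w.1)}
      (isOpen_lt (by fun_prop) (by fun_prop)) ?_
    rcases lt_or_gt_of_ne hik with h | h
    · obtain ⟨w, hw⟩ := main i (k - i) (by omega)
      refine ⟨(w, w), ?_⟩
      rw [← Function.iterate_add_apply, Nat.sub_add_cancel h.le, edist_comm] at hw
      exact hw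
    · obtain ⟨w, hw⟩ := main k (i - k) (by omega)
      refine ⟨(w, w), ?_⟩
      rw [← Function.iterate_add_apply, Nat.sub_add_cancel h.le] at hw
      exact hw
  -- total transitivity
  have hBc : Countable (TopologicalSpace.countableBasis X) :=
    TopologicalSpace.countable_countableBasis X
  have e4 : ∀ᶠ p : X × X in residual (X × X), ∀ (k : ℕ) (V : TopologicalSpace.countableBasis X),
      1 ≤ k → ∃ m, f^[k * m] p.1 ∈ V.1 := by
    rw [eventually_countable_forall]; intro k
    rw [eventually_countable_forall]; intro V
    by_cases hk : 1 ≤ k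
    swap
    · exact Eventually.of_forall fun p h => (hk h).elim
    have hinf : (Set.range fun m : ℕ => k * m).Infinite :=
      Set.infinite_range_of_injective fun a b h => Nat.eq_of_mul_eq_mul_left hk h
    have hVne := TopologicalSpace.nonempty_of_mem_countableBasis V.2
    have hVo := TopologicalSpace.isOpen_of_mem_countableBasis V.2
    filter_upwards [visit_residual hf hmix _ hinf (V.1 ×ˢ Set.univ) (hVo.prod isOpen_univ)
      (hVne.prod ⟨z, trivial⟩)] with p hp _
    obtain ⟨n, -, ⟨m, rfl⟩, h⟩ := hp 0
    exact ⟨m, h.1⟩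
  have e5 := offdiag_residual hiso
  have : Nonempty X := ⟨z⟩
  obtain ⟨φ, hφ, hφd⟩ := mycielski _ (e1.and (e2.and (e3.and (e4.and (e5.and e0)))))
  have hinj : Function.Injective φ := by
    intro x y hxy
    by_contra hne
    exact (hφ x y hne).2.2.2.2.1 hxy
  have hother : ∀ x : CZ, ∃ y, x ≠ y := fun x => (exists_ne x).imp fun _ h => h.symm
  have hU : (⋃ j, Set.range fun a : ℕ → Bool => φ (j, a)) = Set.range φ := by
    ext x; simp
  have hUd : Dense (⋃ j, Set.range fun a : ℕ → Bool => φ (j, a)) := hU ▸ hφd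
  refine ⟨fun j => Set.range fun a : ℕ → Bool => φ (j, a), ?_, ?_, ?_, hUd, ?_, ?_, ?_⟩
  · intro i j hij
    rw [Set.disjoint_left]
    rintro _ ⟨a, rfl⟩ ⟨b, hb⟩
    exact hij (congrArg Prod.fst (hinj hb)).symm
  · intro j
    exact isCantorSet_image _ (by fun_prop) fun a b h => congrArg Prod.snd (hinj h)
  · rintro j _ ⟨a, rfl⟩ k hk
    obtain ⟨y, hy⟩ := hother (j, a)
    have h4 := (hφ _ y hy).2.2.2.1
    rw [(TopologicalSpace.isBasis_countableBasis X).dense_iff]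
    intro V hV _
    obtain ⟨m, hm⟩ := h4 k ⟨V, hV⟩ hk
    exact ⟨_, hm, m, rfl⟩
  · refine hUd.mono ?_
    intro x hx
    exact Set.mem_iUnion.2 ⟨0, x, hx, rfl⟩
  · rintro _ ⟨x, hx, rfl⟩
    obtain ⟨i, y, hy, rfl⟩ := Set.mem_iUnion.1 hx
    exact Set.mem_iUnion.2 ⟨i + 1, y, hy, Function.iterate_succ_apply' f i y⟩
  · intro c hc d hd hcd
    rw [hU] at hc hd
    obtain ⟨i, _, ⟨x, rfl⟩, rfl⟩ := Set.mem_iUnion.1 hc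
    obtain ⟨k, _, ⟨y, rfl⟩, rfl⟩ := Set.mem_iUnion.1 hd
    have hcomm : ∀ n i (w : X), f^[n] (f^[i] w) = f^[i] (f^[n] w) := fun n i w => by
      rw [← Function.iterate_add_apply, ← Function.iterate_add_apply, add_comm]
    have hprox : ∀ m N : ℕ, ∃ n, N ≤ n ∧ n ∈ M ∧
        edist (f^[n] (f^[i] (φ x))) (f^[n] (f^[k] (φ y))) < ((m : ℝ≥0∞) + 1)⁻¹ := by
      simp only [hcomm]
      by_cases hxy : x = y
      · subst hxy
        obtain ⟨y, hy⟩ := hother x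
        exact fun m => (hφ x y hy).2.2.2.2.2 i k m
      · exact fun m => (hφ x y hxy).1 i k m
    have hsep : ∀ q : ℚ, (Real.toNNReal q : ℝ≥0∞) < δ → ∀ N : ℕ, ∃ n, N ≤ n ∧ n ∈ M ∧
        (Real.toNNReal q : ℝ≥0∞) <
          edist (f^[n] (f^[i] (φ x))) (f^[n] (f^[k] (φ y))) := by
      simp only [hcomm]
      by_cases hxy : x = y
      · subst hxy
        obtain ⟨y, hy⟩ := hother x
        have hik : i ≠ k := fun h => hcd (by rw [h])
        exact fun q hq => (hφ x y hy).2.2.1 i k q hik hq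
      · exact fun q hq => (hφ x y hxy).2.1 i k q hq
    constructor
    · rw [← nonpos_iff_eq_zero]
      refine le_of_forall_gt fun r hr => ?_
      obtain ⟨m, hm⟩ := ENNReal.exists_inv_nat_lt hr.ne'
      refine lt_of_le_of_lt (liminf_le_of_frequently_le' ?_) hm
      rw [frequently_inf_principal, frequently_atTop]
      intro N
      obtain ⟨n, h1, h2, h3⟩ := hprox m N
      exact ⟨n, h1, h2, h3.le.trans (ENNReal.inv_le_inv.2 le_self_add)⟩
    · refine le_of_forall_lt fun r hr => ?_
      obtain ⟨q, -, hq1, hq2⟩ := ENNReal.lt_iff_exists_rat_btwn.1 hr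
      refine lt_of_lt_of_le hq1 (le_limsup_of_frequently_le' ?_)
      rw [frequently_inf_principal, frequently_atTop]
      intro N
      obtain ⟨n, h1, h2, h3⟩ := hsep q hq2 N
      exact ⟨n, h1, h2, h3.le⟩
end

section
/- Let X be an infinite compact metric space and let f : X → X be a continuous weakly mixing map. Then f is chaotic in the following sense: there exists η > 0 such that for every point x ∈ X and every nonempty open set V ⊆ X (not necessarily a neighborhood of x) there exists a point y ∈ V with liminf_{n→∞} ρ(fⁿ(x), fⁿ(y)) = 0 and limsup_{n→∞} ρ(fⁿ(x), fⁿ(y)) ≥ η. -/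
open Filter

/-- `f` is (topologically) weakly mixing. -/
def WeaklyMixing {X : Type*} [TopologicalSpace X] (f : X → X) : Prop :=
  ∀ U₁ U₂ V₁ V₂ : Set X, IsOpen U₁ → IsOpen U₂ → IsOpen V₁ → IsOpen V₂ →
    U₁.Nonempty → U₂.Nonempty → V₁.Nonempty → V₂.Nonempty →
    ∃ n : ℕ, 1 ≤ n ∧ (f^[n] '' U₁ ∩ V₁).Nonempty ∧ (f^[n] '' U₂ ∩ V₂).Nonempty

theorem wm_preimage_nonempty {X : Type*} [TopologicalSpace X] (f : X → X) (hf : Continuous f)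
    (hwm : WeaklyMixing f) (N : ℕ) (V : Set X) (hV : IsOpen V) (hne : V.Nonempty) :
    (f^[N] ⁻¹' V).Nonempty := by
  induction N with
  | zero => simpa using hne
  | succ N ih =>
    have ho : IsOpen (f^[N] ⁻¹' V) := hV.preimage (hf.iterate N)
    obtain ⟨n, hn, ⟨_, ⟨u, _, rfl⟩, hu⟩, _⟩ := hwm _ _ _ _ ho ho ho ho ih ih ih ih
    obtain ⟨m, rfl⟩ : ∃ m, n = m + 1 := ⟨n - 1, by omega⟩
    refine ⟨f^[m] u, ?_⟩
    rw [Function.iterate_succ_apply'] at hu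
    simpa [Function.iterate_succ_apply] using hu

/-- Furstenberg's intersection lemma for finitely many targets. -/
theorem wm_finite {X : Type*} [TopologicalSpace X] (f : X → X) (hf : Continuous f)
    (hwm : WeaklyMixing f) (U : Set X) (hU : IsOpen U) (hUne : U.Nonempty)
    {ι : Type*} (B : ι → Set X) (hB : ∀ i, IsOpen (B i)) (hBne : ∀ i, (B i).Nonempty)
    (s : Finset ι) :
    ∃ U' V' : Set X, IsOpen U' ∧ IsOpen V' ∧ U'.Nonempty ∧ V'.Nonempty ∧
      ∀ n, (∃ u ∈ U', f^[n] u ∈ V') → ∀ i ∈ s, ∃ u ∈ U, f^[n] u ∈ B i := by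
  classical
  induction s using Finset.induction_on with
  | empty => exact ⟨U, U, hU, hU, hUne, hUne, by simp⟩
  | insert j s _ ih =>
    obtain ⟨U', V', hU', hV', hUn', hVn', h⟩ := ih
    obtain ⟨m, _, ⟨_, ⟨p, hp, rfl⟩, hp'⟩, ⟨_, ⟨q, hq, rfl⟩, hq'⟩⟩ :=
      hwm U' V' U (B j) hU' hV' hU (hB j) hUn' hVn' hUne (hBne j)
    refine ⟨U' ∩ f^[m] ⁻¹' U, V' ∩ f^[m] ⁻¹' (B j), hU'.inter (hU.preimage (hf.iterate m)),
      hV'.inter ((hB j).preimage (hf.iterate m)), ⟨p, hp, hp'⟩, ⟨q, hq, hq'⟩, ?_⟩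
    rintro n ⟨u, ⟨hu1, hu2⟩, hu3, hu4⟩ i hi
    rcases Finset.mem_insert.1 hi with rfl | hi
    · refine ⟨f^[m] u, hu2, ?_⟩
      rw [← Function.iterate_add_apply, add_comm, Function.iterate_add_apply]
      exact hu4
    · exact h n ⟨u, hu1, hu3⟩ i hi

theorem wm_finite_large {X : Type*} [TopologicalSpace X] (f : X → X) (hf : Continuous f)
    (hwm : WeaklyMixing f) (U : Set X) (hU : IsOpen U) (hUne : U.Nonempty)
    {ι : Type*} (B : ι → Set X) (hB : ∀ i, IsOpen (B i)) (hBne : ∀ i, (B i).Nonempty)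
    (s : Finset ι) (N : ℕ) :
    ∃ n, N ≤ n ∧ ∀ i ∈ s, ∃ u ∈ U, f^[n] u ∈ B i := by
  obtain ⟨U', V', hU', hV', hUn', hVn', h⟩ := wm_finite f hf hwm U hU hUne B hB hBne s
  have ho : IsOpen (f^[N] ⁻¹' V') := hV'.preimage (hf.iterate N)
  have hne := wm_preimage_nonempty f hf hwm N V' hV' hVn'
  obtain ⟨n, _, ⟨_, ⟨u, hu, rfl⟩, hu'⟩, _⟩ := hwm _ _ _ _ hU' hU' ho ho hUn' hUn' hne hne
  refine ⟨N + n, by omega, h _ ⟨u, hu, ?_⟩⟩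
  rw [Function.iterate_add_apply]
  exact hu'

theorem weaklyMixing_is_chaotic {X : Type*} [MetricSpace X] [Infinite X] [CompactSpace X]
    (f : X → X) (hf : Continuous f) (hwm : WeaklyMixing f) :
    ∃ η : ℝ, 0 < η ∧ ∀ x : X, ∀ V : Set X, IsOpen V → V.Nonempty →
      ∃ y ∈ V,
        atTop.liminf (fun n : ℕ => dist (f^[n] x) (f^[n] y)) = 0 ∧
        η ≤ atTop.limsup (fun n : ℕ => dist (f^[n] x) (f^[n] y)) := by
  classical
  obtain ⟨a, b, hab⟩ := exists_pair_ne X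
  have hd : 0 < dist a b := dist_pos.2 hab
  refine ⟨dist a b / 4, by positivity, fun x V hV hVne => ?_⟩
  set η := dist a b / 4 with hη
  have hη0 : 0 < η := by positivity
  let A : ℕ → Set X := fun N => {y | ∃ n, N ≤ n ∧ dist (f^[n] x) (f^[n] y) < 1 / ((N : ℝ) + 1)}
  let C : ℕ → Set X := fun N => {y | ∃ n, N ≤ n ∧ η < dist (f^[n] x) (f^[n] y)}
  have hAo : ∀ N, IsOpen (A N) := by
    intro N
    have : A N = ⋃ n, ⋃ (_ : N ≤ n), {y | dist (f^[n] x) (f^[n] y) < 1 / ((N : ℝ) + 1)} := by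
      ext y; simp [A]
    rw [this]
    exact isOpen_iUnion fun n => isOpen_iUnion fun _ =>
      isOpen_lt (continuous_const.dist (hf.iterate n)) continuous_const
  have hCo : ∀ N, IsOpen (C N) := by
    intro N
    have : C N = ⋃ n, ⋃ (_ : N ≤ n), {y | η < dist (f^[n] x) (f^[n] y)} := by
      ext y; simp [C]
    rw [this]
    exact isOpen_iUnion fun n => isOpen_iUnion fun _ =>
      isOpen_lt continuous_const (continuous_const.dist (hf.iterate n))
  have hAd : ∀ N, Dense (A N) := by
    intro N
    rw [dense_iff_inter_open]
    intro W hW hWne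
    set ε : ℝ := 1 / ((N : ℝ) + 1) with hε
    have hε0 : 0 < ε := by positivity
    obtain ⟨t, ht⟩ := isCompact_univ.elim_finite_subcover (fun c : X => Metric.ball c (ε / 2))
      (fun c => Metric.isOpen_ball)
      (fun z _ => Set.mem_iUnion.2 ⟨z, Metric.mem_ball_self (by positivity)⟩)
    obtain ⟨n, hn, h⟩ := wm_finite_large f hf hwm W hW hWne
      (fun c : X => Metric.ball c (ε / 2)) (fun c => Metric.isOpen_ball)
      (fun c => ⟨c, Metric.mem_ball_self (by positivity)⟩) t N
    obtain ⟨c, hc, hxc⟩ := Set.mem_iUnion₂.1 (ht (Set.mem_univ (f^[n] x)))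
    obtain ⟨y, hy, hyc⟩ := h c hc
    refine ⟨y, hy, n, hn, ?_⟩
    rw [Metric.mem_ball] at hxc hyc
    have := dist_triangle_right (f^[n] x) (f^[n] y) c
    rw [← hε]
    linarith
  have hCd : ∀ N, Dense (C N) := by
    intro N
    rw [dense_iff_inter_open]
    intro W hW hWne
    obtain ⟨n, hn, h⟩ := wm_finite_large f hf hwm W hW hWne
      (fun c : X => Metric.ball c η) (fun c => Metric.isOpen_ball)
      (fun c => ⟨c, Metric.mem_ball_self hη0⟩) {a, b} N
    obtain ⟨p, hp, hpa⟩ := h a (by simp)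
    obtain ⟨q, hq, hqb⟩ := h b (by simp)
    rw [Metric.mem_ball] at hpa hqb
    by_cases h1 : η < dist (f^[n] x) (f^[n] p)
    · exact ⟨p, hp, n, hn, h1⟩
    by_cases h2 : η < dist (f^[n] x) (f^[n] q)
    · exact ⟨q, hq, n, hn, h2⟩
    exfalso
    have e1 := dist_triangle a (f^[n] p) b
    have e2 := dist_triangle (f^[n] p) (f^[n] q) b
    have e3 := dist_triangle_left (f^[n] p) (f^[n] q) (f^[n] x)
    rw [dist_comm] at hpa
    push Not at h1 h2
    linarith
  have hD : Dense (⋂ N, A N ∩ C N) := dense_iInter_of_isOpen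
    (fun N => (hAo N).inter (hCo N)) (fun N => (hAd N).inter_of_isOpen_left (hCd N) (hAo N))
  obtain ⟨y, hyV, hy⟩ := dense_iff_inter_open.1 hD V hV hVne
  rw [Set.mem_iInter] at hy
  have hbA : IsBoundedUnder (· ≤ ·) atTop (fun n : ℕ => dist (f^[n] x) (f^[n] y)) :=
    isBoundedUnder_of ⟨Metric.diam (Set.univ : Set X), fun n =>
      Metric.dist_le_diam_of_mem isCompact_univ.isBounded (Set.mem_univ _) (Set.mem_univ _)⟩
  have hbB : IsBoundedUnder (· ≥ ·) atTop (fun n : ℕ => dist (f^[n] x) (f^[n] y)) :=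
    isBoundedUnder_of ⟨0, fun n => dist_nonneg⟩
  refine ⟨y, hyV, le_antisymm ?_ ?_, ?_⟩
  · refine le_of_forall_pos_le_add fun ε hε => ?_
    rw [zero_add]
    refine liminf_le_of_frequently_le ?_ hbB
    rw [frequently_atTop]
    intro M
    obtain ⟨k, hk⟩ := exists_nat_one_div_lt hε
    obtain ⟨n, hn, h⟩ := (hy (max M k)).1
    refine ⟨n, le_trans (le_max_left _ _) hn, h.le.trans (le_trans ?_ hk.le)⟩
    apply one_div_le_one_div_of_le (by positivity)
    have : (k : ℝ) ≤ ((max M k : ℕ) : ℝ) := by exact_mod_cast le_max_right M k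
    linarith
  · exact le_liminf_of_le hbA.isCoboundedUnder_ge (Eventually.of_forall fun n => dist_nonneg)
  · refine le_limsup_of_frequently_le ?_ hbA
    rw [frequently_atTop]
    intro M
    obtain ⟨n, hn, h⟩ := (hy M).2
    exact ⟨n, hn, h.le⟩
end
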